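/- Constant Wronskian identity: let ψ : ℝ → ℝ be a twice continuously differentiable solution of the mode-zero Jacobi equation (B·ψ')'(s) + B(s)·(|II|²(s) − 2)·ψ(s) = 0 with initial data ψ(0) = 1/(2·K) and ψ'(0) = 0, where |II|²(s) := 2·(B''(s)/B(s) − 1), and let u_*(s) := −a·sinh(2s)/B(s). Then for every s ∈ ℝ, B(s)·(ψ(s)·u_*'(s) − ψ'(s)·u_*(s)) = −a/K. -/

import Mathlib

namespace MoriCatenoid

/-- Profile function `B(s) = √(a·cosh(2s) − 1/2)` of the Mori family. -/
noncomputable def B (a s : ℝ) : ℝ := Real.sqrt (a * Real.cosh (2 * s) - 1 / 2)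

/-- Profile function `A(s) = √(a·cosh(2s) + 1/2)` of the Mori family. -/
noncomputable def A (a s : ℝ) : ℝ := Real.sqrt (a * Real.cosh (2 * s) + 1 / 2)

/-- The constant `K = √(a² − 1/4)`. -/
noncomputable def K (a : ℝ) : ℝ := Real.sqrt (a ^ 2 - 1 / 4)

/-- The angle function `φ(s) = K·∫₀ˢ dt/(A(t)²·B(t))`. -/
noncomputable def φ (a s : ℝ) : ℝ := K a * ∫ t in (0:ℝ)..s, 1 / ((A a t) ^ 2 * B a t)

/-- The mode-one Jacobi field `f_*(s) = d/ds (A(s)·cosh(φ(s)))`. -/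
noncomputable def fstar (a s : ℝ) : ℝ := deriv (fun t => A a t * Real.cosh (φ a t)) s

/-- Squared norm of the second fundamental form, `|II|²(s) = 2·(B''(s)/B(s) − 1)`. -/
noncomputable def IIsq (a s : ℝ) : ℝ := 2 * (deriv (deriv (B a)) s / B a s - 1)

/-- The mode-`k` potential `W_k(s) = |II|²(s) − 2 − k²/B(s)²`. -/
noncomputable def W (a : ℝ) (k : ℤ) (s : ℝ) : ℝ := IIsq a s - 2 - (k : ℝ) ^ 2 / (B a s) ^ 2

/-- Inverse hyperbolic cosine: `arcosh x = log (x + √(x² − 1))`. -/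
noncomputable def arcosh (x : ℝ) : ℝ := Real.log (x + Real.sqrt (x ^ 2 - 1))

/-- The axial boost field `u_*(s) = −a·sinh(2s)/B(s)`. -/
noncomputable def ustar (a s : ℝ) : ℝ := -a * Real.sinh (2 * s) / B a s

/-- The radial quadratic form of mode `k`:
`S_k(u) = ∫_{−s₀}^{s₀} (B·u'² − B·W_k·u²) − coth(r)·B(s₀)·(u(s₀)² + u(−s₀)²)`,
where `u'` is the derivative of `u` within `[−s₀, s₀]`. -/
noncomputable def Sk (a s₀ r : ℝ) (k : ℤ) (u : ℝ → ℝ) : ℝ :=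
  (∫ s in (-s₀)..s₀,
      (B a s * (derivWithin u (Set.Icc (-s₀) s₀) s) ^ 2 - B a s * W a k s * u s ^ 2))
    - Real.cosh r / Real.sinh r * B a s₀ * (u s₀ ^ 2 + u (-s₀) ^ 2)

/-!
The point is that `u_* = -B'`. Differentiating `B² = a cosh 2s - 1/2` twice gives
`B B'' + B'² = 2 B² + 1`, and differentiating this once more gives
`(B B'')' + (2 B'' - 4 B) B' = 0`, which is the mode-zero Jacobi equation for `B'`, since
`B (|II|² - 2) = 2 B'' - 4 B`. So `ψ` and `u_*` solve the same Sturm–Liouville equation, and their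
weighted Wronskian is constant; evaluating it at `0`, where `u_*` vanishes, gives `-2 a ψ(0)`.
-/

section SturmLiouville

variable {𝕜 : Type*} [RCLike 𝕜] {p q u v : 𝕜 → 𝕜}

/-- `u` is a solution of the Sturm–Liouville equation `(p u')' + q u = 0`. Requiring both `u` and
`p u'` to be differentiable keeps junk values of `deriv` out of the equation. -/
structure IsSturmLiouvilleSolution (p q u : 𝕜 → 𝕜) : Prop where
  differentiable : Differentiable 𝕜 u
  hasDerivAt_mul_deriv : ∀ s, HasDerivAt (fun t => p t * deriv u t) (-(q s * u s)) s

theorem IsSturmLiouvilleSolution.wronskian_eq (hu : IsSturmLiouvilleSolution p q u)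
    (hv : IsSturmLiouvilleSolution p q v) (s t : 𝕜) :
    p s * (u s * deriv v s - deriv u s * v s) = p t * (u t * deriv v t - deriv u t * v t) := by
  have hW (x : 𝕜) :
      HasDerivAt (fun y => p y * (u y * deriv v y - deriv u y * v y)) 0 x := by
    have h := ((hu.differentiable x).hasDerivAt.mul (hv.hasDerivAt_mul_deriv x)).sub
      ((hu.hasDerivAt_mul_deriv x).mul (hv.differentiable x).hasDerivAt)
    refine (h.congr_deriv (by ring)).congr_of_eventuallyEq (.of_forall fun y => ?_)
    simp only [Pi.sub_apply, Pi.mul_apply]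
    ring
  exact is_const_of_deriv_eq_zero (fun x => (hW x).differentiableAt) (fun x => (hW x).deriv) s t

end SturmLiouville

section CatenoidProfile

variable {a : ℝ}

lemma mul_cosh_sub_half_pos (ha : 1 / 2 < a) (x : ℝ) : 0 < a * Real.cosh x - 1 / 2 := by
  nlinarith [Real.one_le_cosh x]

lemma B_pos (ha : 1 / 2 < a) (s : ℝ) : 0 < B a s :=
  Real.sqrt_pos.mpr (mul_cosh_sub_half_pos ha _)

lemma B_sq (ha : 1 / 2 < a) (s : ℝ) : B a s ^ 2 = a * Real.cosh (2 * s) - 1 / 2 :=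
  Real.sq_sqrt (mul_cosh_sub_half_pos ha _).le

lemma contDiff_B (ha : 1 / 2 < a) {n : WithTop ℕ∞} : ContDiff ℝ n (B a) :=
  ContDiff.sqrt (by fun_prop) fun _ => (mul_cosh_sub_half_pos ha _).ne'

lemma hasDerivAt_B (ha : 1 / 2 < a) (s : ℝ) : HasDerivAt (B a) (deriv (B a) s) s :=
  ((contDiff_B ha).differentiable one_ne_zero s).hasDerivAt

lemma hasDerivAt_deriv_B (ha : 1 / 2 < a) (s : ℝ) :
    HasDerivAt (deriv (B a)) (deriv (deriv (B a)) s) s :=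
  ((contDiff_B ha).differentiable_deriv_two s).hasDerivAt

lemma B_mul_deriv_B (ha : 1 / 2 < a) (s : ℝ) :
    B a s * deriv (B a) s = a * Real.sinh (2 * s) := by
  have hleft : HasDerivAt (fun t => B a t ^ 2) (2 * (B a s * deriv (B a) s)) s :=
    ((hasDerivAt_B ha s).fun_pow 2).congr_deriv (by ring)
  have hright : HasDerivAt (fun t => B a t ^ 2) (2 * (a * Real.sinh (2 * s))) s := by
    simp only [B_sq ha]
    exact (((((hasDerivAt_id s).const_mul 2).cosh).const_mul a).sub_const (1 / 2)).congr_deriv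
      (by simp only [id]; ring)
  exact mul_left_cancel₀ two_ne_zero (hleft.unique hright)

lemma B_mul_deriv_deriv_B (ha : 1 / 2 < a) (s : ℝ) :
    B a s * deriv (deriv (B a)) s = 2 * B a s ^ 2 + 1 - deriv (B a) s ^ 2 := by
  have hleft := (hasDerivAt_B ha s).fun_mul (hasDerivAt_deriv_B ha s)
  have hright : HasDerivAt (fun t => B a t * deriv (B a) t) (2 * a * Real.cosh (2 * s)) s := by
    simp only [B_mul_deriv_B ha]
    exact ((((hasDerivAt_id s).const_mul 2).sinh).const_mul a).congr_deriv
      (by simp only [id]; ring)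
  linear_combination hleft.unique hright - 2 * B_sq ha s

lemma hasDerivAt_B_mul_deriv_deriv_B (ha : 1 / 2 < a) (s : ℝ) :
    HasDerivAt (fun t => B a t * deriv (deriv (B a)) t)
      ((4 * B a s - 2 * deriv (deriv (B a)) s) * deriv (B a) s) s := by
  simp only [B_mul_deriv_deriv_B ha]
  exact (((((hasDerivAt_B ha s).fun_pow 2).const_mul 2).add_const 1).fun_sub
    ((hasDerivAt_deriv_B ha s).fun_pow 2)).congr_deriv (by ring)

lemma deriv_B_zero (ha : 1 / 2 < a) : deriv (B a) 0 = 0 := by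
  simpa [(B_pos ha 0).ne'] using B_mul_deriv_B ha 0

lemma B_mul_IIsq_sub_two (ha : 1 / 2 < a) (s : ℝ) :
    B a s * (IIsq a s - 2) = 2 * deriv (deriv (B a)) s - 4 * B a s := by
  have hB := (B_pos ha s).ne'
  rw [IIsq]
  field_simp
  ring

lemma ustar_eq_neg_deriv_B (ha : 1 / 2 < a) : ustar a = fun s => -deriv (B a) s := by
  funext s
  rw [ustar, div_eq_iff (B_pos ha s).ne']
  linear_combination B_mul_deriv_B ha s

lemma hasDerivAt_ustar (ha : 1 / 2 < a) (s : ℝ) :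
    HasDerivAt (ustar a) (-deriv (deriv (B a)) s) s := by
  rw [ustar_eq_neg_deriv_B ha]
  exact (hasDerivAt_deriv_B ha s).fun_neg

lemma isSturmLiouvilleSolution_ustar (ha : 1 / 2 < a) :
    IsSturmLiouvilleSolution (B a) (fun s => B a s * (IIsq a s - 2)) (ustar a) where
  differentiable s := (hasDerivAt_ustar ha s).differentiableAt
  hasDerivAt_mul_deriv s := by
    have hderiv : deriv (ustar a) = fun t => -deriv (deriv (B a)) t :=
      funext fun t => (hasDerivAt_ustar ha t).deriv
    simp only [hderiv, mul_neg, B_mul_IIsq_sub_two ha]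
    rw [ustar_eq_neg_deriv_B ha]
    exact (hasDerivAt_B_mul_deriv_deriv_B ha s).fun_neg.congr_deriv (by ring)

lemma ustar_zero : ustar a 0 = 0 := by
  simp [ustar]

lemma B_mul_deriv_ustar_zero (ha : 1 / 2 < a) : B a 0 * deriv (ustar a) 0 = -2 * a := by
  have hB : B a 0 ^ 2 = a - 1 / 2 := by simpa using B_sq ha 0
  rw [(hasDerivAt_ustar ha 0).deriv, mul_neg, B_mul_deriv_deriv_B ha, deriv_B_zero ha, hB]
  ring

end CatenoidProfile

theorem constant_wronskian_general {a : ℝ} (ha : 1 / 2 < a) {ψ : ℝ → ℝ}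
    (hψ : Differentiable ℝ ψ) (hψ' : Differentiable ℝ (deriv ψ))
    (hode : ∀ s : ℝ, deriv (fun t => B a t * deriv ψ t) s
        + B a s * (IIsq a s - 2) * ψ s = 0) (s : ℝ) :
    B a s * (ψ s * deriv (ustar a) s - deriv ψ s * ustar a s) = -2 * a * ψ 0 := by
  have hsol : IsSturmLiouvilleSolution (B a) (fun s => B a s * (IIsq a s - 2)) ψ :=
    ⟨hψ, fun t => (((hasDerivAt_B ha t).differentiableAt.fun_mul (hψ' t)).hasDerivAt).congr_deriv
      (eq_neg_of_add_eq_zero_left (hode t))⟩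
  calc B a s * (ψ s * deriv (ustar a) s - deriv ψ s * ustar a s)
      = B a 0 * (ψ 0 * deriv (ustar a) 0 - deriv ψ 0 * ustar a 0) :=
        hsol.wronskian_eq (isSturmLiouvilleSolution_ustar ha) s 0
    _ = B a 0 * deriv (ustar a) 0 * ψ 0 := by rw [ustar_zero]; ring
    _ = -2 * a * ψ 0 := by rw [B_mul_deriv_ustar_zero ha]

/-- Constant Wronskian identity: if `ψ` is a `C²` solution of the mode-zero
Jacobi equation `(B·ψ')' + B·(|II|² − 2)·ψ = 0` with `ψ(0) = 1/(2K)` and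
`ψ'(0) = 0`, then for every `s`,
`B(s)·(ψ(s)·u_*'(s) − ψ'(s)·u_*(s)) = −a/K`. -/
theorem constant_wronskian (a : ℝ) (ha : 1 / 2 < a) (ψ : ℝ → ℝ)
    (hψ : ContDiff ℝ 2 ψ)
    (hode : ∀ s : ℝ, deriv (fun t => B a t * deriv ψ t) s
        + B a s * (IIsq a s - 2) * ψ s = 0)
    (hψ0 : ψ 0 = 1 / (2 * K a)) (hψ0' : deriv ψ 0 = 0) (s : ℝ) :
    B a s * (ψ s * deriv (ustar a) s - deriv ψ s * ustar a s) = -a / K a := by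
  rw [constant_wronskian_general ha (hψ.differentiable two_ne_zero) hψ.differentiable_deriv_two
    hode, hψ0]
  ring

end MoriCatenoid
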